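/- Let d ≥ 1, let I be a nonempty index set, and let M : I × ℕ → [0,∞) satisfy sup_{a∈I} ∑_{m=0}^∞ M(a,m) < ∞ and the uniform tail condition: for every ε > 0 there exists ℓ ∈ ℕ such that ∑_{m=ℓ}^∞ M(a,m) ≤ ε for all a ∈ I. Let p : I × ℕ → [0,1] satisfy p(a,m) ≤ 2^{−2(m−1)}·M(a,m) for all a ∈ I and all m ≥ 1. Then lim_{N→∞} sup_{a∈I} ∑_{m=0}^∞ 2^{2m} ∑_{l=0}^∞ 2^{−2l} · min{ 2·p(a,m), 2^{dl/2}·(p(a,m)/N)^{1/2} } = 0; that is, for every ε > 0 there exists N₀ such that the double series is ≤ ε for all N ≥ N₀ and all a ∈ I. -/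

import Mathlib

open scoped ENNReal

/-! A uniform version of Tannery's theorem is applied twice. Within one annulus the terms at each
scale `l` are at most `2^{dl/2} N^{-1/2}`, because the mass is at most `1`, and are dominated by
the summable sequence `2 · 2^{-2l}`; so the inner series tends to `0` uniformly in `a`. Across
annuli, `min {2p, ·} ≤ 2p` dominates the `m`-th inner series by a multiple of
`2^{2m} p(a,m) ≤ 4 M(a,m)`, whose tails are uniformly small. -/

open Filter Topology
open scoped NNReal

section UniformTails

variable {ι : Type*}

/-- The uniform tail condition on a family of series of nonnegative terms: the tails
`∑_{m ≥ k} g(a,m)` tend to `0` as `k → ∞`, uniformly in `a`. -/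
def UniformlySmallTails (g : ι → ℕ → ℝ≥0∞) : Prop :=
  Tendsto (fun k ↦ ⨆ a, ∑' m, g a (m + k)) atTop (𝓝 0)

lemma antitone_iSup_tsum_nat_add (g : ι → ℕ → ℝ≥0∞) :
    Antitone fun k ↦ ⨆ a, ∑' m, g a (m + k) := by
  refine antitone_nat_of_succ_le fun k ↦ iSup_mono fun a ↦ ?_
  simpa only [add_assoc, add_comm 1 k] using
    ENNReal.tsum_comp_le_tsum_of_injective (add_left_injective 1) fun m ↦ g a (m + k)

namespace UniformlySmallTails

variable {f g : ι → ℕ → ℝ≥0∞}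

lemma of_forall_exists_le_ofReal
    (h : ∀ ε > (0 : ℝ), ∃ k, ∀ a, ∑' m, g a (m + k) ≤ ENNReal.ofReal ε) :
    UniformlySmallTails g := by
  refine (ENNReal.tendsto_atTop_zero_iff_le_of_antitone (antitone_iSup_tsum_nat_add g)).2
    fun ε hε ↦ ?_
  obtain ⟨δ, -, hδ, hδε⟩ := ENNReal.lt_iff_exists_real_btwn.1 hε
  obtain ⟨k, hk⟩ := h δ (ENNReal.ofReal_pos.1 hδ)
  exact ⟨k, (iSup_le hk).trans hδε.le⟩

lemma of_tsum_ne_top {b : ℕ → ℝ≥0∞} (hb : ∑' l, b l ≠ ∞) :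
    UniformlySmallTails fun _ : ι ↦ b :=
  tendsto_of_tendsto_of_tendsto_of_le_of_le tendsto_const_nhds
    (ENNReal.tendsto_sum_nat_add b hb) (fun _ ↦ zero_le) fun _ ↦ iSup_const_le

lemma of_le_const_mul (hg : UniformlySmallTails g) {C : ℝ≥0∞} (hC : C ≠ ∞)
    (hfg : ∀ᶠ m in atTop, ∀ a, f a m ≤ C * g a m) : UniformlySmallTails f := by
  obtain ⟨m₀, hm₀⟩ := eventually_atTop.1 hfg
  have hCg : Tendsto (fun k ↦ C * ⨆ a, ∑' m, g a (m + k)) atTop (𝓝 0) := by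
    simpa only [mul_zero] using ENNReal.Tendsto.const_mul hg (Or.inr hC)
  refine tendsto_of_tendsto_of_tendsto_of_le_of_le' tendsto_const_nhds hCg
    (Eventually.of_forall fun _ ↦ zero_le) ?_
  filter_upwards [eventually_ge_atTop m₀] with k hk
  simp only [ENNReal.mul_iSup, ← ENNReal.tsum_mul_left]
  exact iSup_mono fun a ↦ ENNReal.tsum_le_tsum fun m ↦ hm₀ (m + k) (by lia) a

lemma tendsto_iSup_tsum_zero {α : Type*} {l : Filter α} {F : α → ι → ℕ → ℝ≥0∞}
    (hg : UniformlySmallTails g) (hFg : ∀ n a m, F n a m ≤ g a m)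
    (hF : ∀ m, Tendsto (fun n ↦ ⨆ a, F n a m) l (𝓝 0)) :
    Tendsto (fun n ↦ ⨆ a, ∑' m, F n a m) l (𝓝 0) := by
  refine ENNReal.tendsto_nhds_zero.2 fun ε hε ↦ ?_
  have hε_half : 0 < ε / 2 := ENNReal.half_pos hε.ne'
  obtain ⟨k, hk⟩ := (ENNReal.tendsto_nhds_zero.1 hg _ hε_half).exists
  have hhead : Tendsto (fun n ↦ ∑ m ∈ Finset.range k, ⨆ a, F n a m) l (𝓝 0) := by
    simpa only [Finset.sum_const_zero] using tendsto_finsetSum (Finset.range k) fun m _ ↦ hF m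
  filter_upwards [ENNReal.tendsto_nhds_zero.1 hhead _ hε_half] with n hn
  refine iSup_le fun a ↦ ?_
  calc ∑' m, F n a m
      = ∑ m ∈ Finset.range k, F n a m + ∑' m, F n a (m + k) :=
        (ENNReal.summable.sum_add_tsum_nat_add' (k := k)).symm
    _ ≤ (∑ m ∈ Finset.range k, ⨆ a, F n a m) + ⨆ a, ∑' m, g a (m + k) :=
        add_le_add (Finset.sum_le_sum fun m _ ↦ le_iSup (fun a ↦ F n a m) a)
          ((ENNReal.tsum_le_tsum fun m ↦ hFg n a (m + k)).trans
            (le_iSup (fun a ↦ ∑' m, g a (m + k)) a))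
    _ ≤ ε / 2 + ε / 2 := add_le_add hn hk
    _ = ε := ENNReal.add_halves ε

end UniformlySmallTails

end UniformTails

section DeviationBound

/-- The Fournier–Guillin bound on the expected `ℓ¹` distance between the empirical masses from `N`
samples and the true masses of the cells of a partition of a set of mass `x`, where `w` is the
square root of the number of cells. Division by zero makes the second argument of `min` vanish
at `N = 0`. -/
noncomputable def deviationBound (w : ℝ) (N : ℕ) (x : ℝ) : ℝ :=
  min (2 * x) (w * √(x / N))

lemma ofReal_deviationBound_le_two_mul (w : ℝ) (N : ℕ) (x : ℝ≥0) :
    ENNReal.ofReal (deviationBound w N x) ≤ 2 * x := by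
  have h : ENNReal.ofReal (2 * x) = 2 * x := by
    rw [ENNReal.ofReal_mul zero_le_two, ENNReal.ofReal_ofNat, ENNReal.ofReal_coe_nnreal]
  exact h ▸ ENNReal.ofReal_le_ofReal (min_le_left _ _)

lemma deviationBound_le_abs_mul_sqrt {x B : ℝ} (hxB : x ≤ B) (w : ℝ) (N : ℕ) :
    deviationBound w N x ≤ |w| * √(B / N) :=
  (min_le_right _ _).trans (by gcongr; exact le_abs_self w)

variable {I : Type*}

lemma tendsto_iSup_ofReal_deviationBound {q : I → ℝ} {B : ℝ} (hq : ∀ a, q a ≤ B) (w : ℝ) :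
    Tendsto (fun N : ℕ ↦ ⨆ a, ENNReal.ofReal (deviationBound w N (q a))) atTop (𝓝 0) := by
  have hlim : Tendsto (fun N : ℕ ↦ ENNReal.ofReal (|w| * √(B / N))) atTop (𝓝 0) := by
    simpa only [Real.sqrt_zero, mul_zero, ENNReal.ofReal_zero] using
      ENNReal.tendsto_ofReal ((tendsto_const_div_atTop_nhds_zero_nat B).sqrt.const_mul |w|)
  exact tendsto_of_tendsto_of_tendsto_of_le_of_le tendsto_const_nhds hlim (fun _ ↦ zero_le)
    fun N ↦ iSup_le fun a ↦ ENNReal.ofReal_le_ofReal (deviationBound_le_abs_mul_sqrt (hq a) w N)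

lemma tendsto_iSup_tsum_mul_deviationBound {b : ℕ → ℝ≥0∞} (hb : ∑' l, b l ≠ ∞) (w : ℕ → ℝ)
    {q : I → ℝ≥0} {B : ℝ≥0} (hq : ∀ a, q a ≤ B) :
    Tendsto (fun N : ℕ ↦ ⨆ a, ∑' l, b l * ENNReal.ofReal (deviationBound (w l) N (q a)))
      atTop (𝓝 0) := by
  have hdom : ∑' l, b l * (2 * B) ≠ ∞ := by
    rw [ENNReal.tsum_mul_right]
    finiteness
  refine (UniformlySmallTails.of_tsum_ne_top hdom).tendsto_iSup_tsum_zero (fun N a l ↦ ?_)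
    fun l ↦ ?_
  · grw [ofReal_deviationBound_le_two_mul, hq a]
  · simpa only [ENNReal.mul_iSup, mul_zero] using
      ENNReal.Tendsto.const_mul
        (tendsto_iSup_ofReal_deviationBound (fun a ↦ NNReal.coe_le_coe.2 (hq a)) (w l))
        (Or.inr (ENNReal.ne_top_of_tsum_ne_top hb l))

lemma tendsto_iSup_tsum_mul_tsum_mul_deviationBound
    {b : ℕ → ℝ≥0∞} (hb : ∑' l, b l ≠ ∞) (w : ℕ → ℝ) {c : ℕ → ℝ≥0∞} (hc : ∀ m, c m ≠ ∞)
    {p : I → ℕ → ℝ≥0} {B : ℕ → ℝ≥0} (hpB : ∀ a m, p a m ≤ B m)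
    (hcp : UniformlySmallTails fun a m ↦ c m * p a m) :
    Tendsto (fun N : ℕ ↦
        ⨆ a, ∑' m, c m * ∑' l, b l * ENNReal.ofReal (deviationBound (w l) N (p a m)))
      atTop (𝓝 0) := by
  have hdom : UniformlySmallTails fun a m ↦ c m * ∑' l, b l * (2 * p a m) := by
    refine hcp.of_le_const_mul (C := 2 * ∑' l, b l) (by finiteness)
      (Eventually.of_forall fun m a ↦ le_of_eq ?_)
    rw [ENNReal.tsum_mul_right]
    ring
  refine hdom.tendsto_iSup_tsum_zero (fun N a m ↦ ?_) fun m ↦ ?_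
  · gcongr
    exact ofReal_deviationBound_le_two_mul _ N _
  · simpa only [ENNReal.mul_iSup, mul_zero] using
      ENNReal.Tendsto.const_mul (tendsto_iSup_tsum_mul_deviationBound hb w fun a ↦ hpB a m)
        (Or.inr (hc m))

end DeviationBound

lemma two_pow_mul_le_four_mul {m : ℕ} {x y : ℝ}
    (h : x ≤ (2 : ℝ) ^ (-(2 : ℝ) * ((m : ℝ) - 1)) * y) : 2 ^ (2 * m) * x ≤ 4 * y := by
  have hpow : (2 : ℝ) ^ (2 * m) * (2 : ℝ) ^ (-(2 : ℝ) * ((m : ℝ) - 1)) = 4 := by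
    rw [← Real.rpow_natCast, ← Real.rpow_add two_pos]
    push_cast
    ring_nf
    norm_num
  calc (2 : ℝ) ^ (2 * m) * x ≤ 2 ^ (2 * m) * ((2 : ℝ) ^ (-(2 : ℝ) * ((m : ℝ) - 1)) * y) := by
        gcongr
    _ = 4 * y := by rw [← mul_assoc, hpow]

lemma tsum_ofReal_two_rpow_neg_two_mul_ne_top :
    ∑' l : ℕ, ENNReal.ofReal ((2 : ℝ) ^ (-(2 : ℝ) * (l : ℝ))) ≠ ∞ := by
  have hgeom (l : ℕ) : (2 : ℝ) ^ (-(2 : ℝ) * (l : ℝ)) = (1 / 4) ^ l := by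
    rw [Real.rpow_mul two_pos.le, Real.rpow_natCast]
    norm_num
  simp only [hgeom]
  exact (summable_geometric_of_lt_one (by norm_num) (by norm_num)).tsum_ofReal_ne_top

theorem fournier_guillin_double_series_uniform_limit_general
    (d : ℝ) {I : Type*} (M p : I → ℕ → ℝ≥0)
    (hMtail : ∀ ε > (0 : ℝ), ∃ ℓ : ℕ, ∀ a : I,
      ∑' m : ℕ, (M a (m + ℓ) : ℝ≥0∞) ≤ ENNReal.ofReal ε)
    (hp1 : ∀ a m, p a m ≤ 1)
    (hpM : ∀ a : I, ∀ m : ℕ, 1 ≤ m →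
      (p a m : ℝ) ≤ (2 : ℝ) ^ (-(2 : ℝ) * ((m : ℝ) - 1)) * M a m) :
    ∀ ε > (0 : ℝ), ∃ N₀ : ℕ, ∀ N ≥ N₀, ∀ a : I,
      ∑' m : ℕ, ∑' l : ℕ,
        ENNReal.ofReal ((2 : ℝ) ^ (2 * m) * (2 : ℝ) ^ (-(2 : ℝ) * (l : ℝ)) *
          min (2 * (p a m : ℝ)) ((2 : ℝ) ^ ((d * (l : ℝ)) / 2) * Real.sqrt (p a m / (N : ℝ))))
        ≤ ENNReal.ofReal ε := by
  intro ε hε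
  have hmass : UniformlySmallTails fun a m ↦ ENNReal.ofReal (2 ^ (2 * m)) * (p a m : ℝ≥0∞) := by
    have hM : UniformlySmallTails fun a m ↦ (M a m : ℝ≥0∞) :=
      .of_forall_exists_le_ofReal hMtail
    refine hM.of_le_const_mul (C := 4) (by finiteness) ?_
    filter_upwards [eventually_ge_atTop 1] with m hm a
    simpa (disch := positivity) only [ENNReal.ofReal_mul, ENNReal.ofReal_coe_nnreal,
      ENNReal.ofReal_ofNat] using
      ENNReal.ofReal_le_ofReal (two_pow_mul_le_four_mul (hpM a m hm))
  have hlim := tendsto_iSup_tsum_mul_tsum_mul_deviationBound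
    tsum_ofReal_two_rpow_neg_two_mul_ne_top (fun l ↦ (2 : ℝ) ^ ((d * (l : ℝ)) / 2))
    (fun _ ↦ ENNReal.ofReal_ne_top) hp1 hmass
  obtain ⟨N₀, hN₀⟩ := eventually_atTop.1
    (ENNReal.tendsto_nhds_zero.1 hlim _ (ENNReal.ofReal_pos.2 hε))
  refine ⟨N₀, fun N hN a ↦ ?_⟩
  simpa (disch := positivity) only [deviationBound, ENNReal.ofReal_mul, ENNReal.tsum_mul_left,
    mul_assoc] using iSup_le_iff.1 (hN₀ N hN) a

/-- The real-analytic core of the uniform Fournier--Guillin estimate: if the restricted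
second moments `M(a,m)` are summable uniformly in `a` with uniformly small tails, and the
annulus masses `p(a,m)` are controlled by `2^{-2(m-1)} M(a,m)`, then the Fournier--Guillin
double series tends to `0` as `N → ∞`, uniformly in `a`. -/
theorem fournier_guillin_double_series_uniform_limit
    (d : ℕ) (hd : 1 ≤ d) {I : Type*} [Nonempty I]
    (M : I → ℕ → ℝ) (hM0 : ∀ a m, 0 ≤ M a m)
    (hMsum : ∃ C : ℝ≥0∞, C < ⊤ ∧ ∀ a : I, ∑' m : ℕ, ENNReal.ofReal (M a m) ≤ C)
    (hMtail : ∀ ε > (0 : ℝ), ∃ ℓ : ℕ, ∀ a : I,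
      ∑' m : ℕ, ENNReal.ofReal (M a (m + ℓ)) ≤ ENNReal.ofReal ε)
    (p : I → ℕ → ℝ) (hp0 : ∀ a m, 0 ≤ p a m) (hp1 : ∀ a m, p a m ≤ 1)
    (hpM : ∀ a : I, ∀ m : ℕ, 1 ≤ m →
      p a m ≤ (2 : ℝ) ^ (-(2 : ℝ) * ((m : ℝ) - 1)) * M a m) :
    ∀ ε > (0 : ℝ), ∃ N₀ : ℕ, ∀ N ≥ N₀, ∀ a : I,
      ∑' m : ℕ, ∑' l : ℕ,
        ENNReal.ofReal ((2 : ℝ) ^ (2 * m) * (2 : ℝ) ^ (-(2 : ℝ) * (l : ℝ)) *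
          min (2 * p a m)
            ((2 : ℝ) ^ (((d : ℝ) * (l : ℝ)) / 2) * Real.sqrt (p a m / (N : ℝ))))
        ≤ ENNReal.ofReal ε := by
  lift M to I → ℕ → ℝ≥0 using hM0
  lift p to I → ℕ → ℝ≥0 using hp0
  simp only [ENNReal.ofReal_coe_nnreal] at hMtail
  exact fournier_guillin_double_series_uniform_limit_general d M p hMtail hp1 hpM
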